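/- arXiv:2305.14636 — 4 statements merged into one kernel-verified Lean document; each statement's English description precedes it below -/
import Mathlib

section
/- Let G be a connected finite simple graph on n ≥ 3 vertices with adjacency matrix A. Let M be a real symmetric matrix with nonnegative entries, indexed by the vertex set of G, which is irreducible and satisfies M_{xy} = 0 whenever x = y or x is adjacent to y. If the matrix B = M + A is not equal to J − I (where J is the all-ones matrix and I the identity), then B has at least three distinct eigenvalues. -/
/-- `θ` is an eigenvalue of the real matrix `M`. -/
def IsEigenval {n : Type*} [Fintype n] (M : Matrix n n ℝ) (θ : ℝ) : Prop :=
  ∃ v : n → ℝ, v ≠ 0 ∧ M.mulVec v = θ • v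

/-
Connectedness of `G` makes `B = M + A` irreducible. If the spectrum of `B` is contained in `{p, q}`
with `p ≤ q`, then `N = B - p` satisfies `N² = (q - p) N`, and comparing diagonals gives `p < 0`, so
`N` is nonnegative and irreducible as well. Every power of `N` is a multiple of `N`, so
irreducibility makes `N` entrywise positive. The columns of `N` are eigenvectors for `q - p`, hence
proportional by the Perron argument: `N` has rank one. Being symmetric with constant diagonal `-p`,
it has all entries equal to `-p`, that is, `B = -p (J - I)`. The entry `1` at an edge of `G` forces
`p = -1`.
-/

open Matrix

section Positive

variable {n R : Type*} [Fintype n]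

theorem eq_zero_of_nonneg_of_mulVec_eq_smul_of_apply_eq_zero [Ring R] [LinearOrder R]
    [IsStrictOrderedRing R] {N : Matrix n n R} {c : R} (hN : ∀ i j, 0 < N i j)
    {w : n → R} (hw : 0 ≤ w) (hNw : N *ᵥ w = c • w) {i : n} (hi : w i = 0) : w = 0 := by
  have hsum : ∑ j, N i j * w j = 0 := by
    simpa [mulVec, dotProduct, hi] using congrFun hNw i
  have hterms := (Fintype.sum_eq_zero_iff_of_nonneg fun j ↦ mul_nonneg (hN i j).le (hw j)).1 hsum
  exact funext fun j ↦ (mul_eq_zero.1 (congrFun hterms j)).resolve_left (hN i j).ne'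

variable [Field R] [LinearOrder R] [IsStrictOrderedRing R] {N : Matrix n n R} {c : R}

theorem exists_eq_smul_of_mulVec_eq_smul (hN : ∀ i j, 0 < N i j) {u v : n → R}
    (hv : ∀ i, 0 < v i) (hNu : N *ᵥ u = c • u) (hNv : N *ᵥ v = c • v) :
    ∃ s : R, u = s • v := by
  rcases isEmpty_or_nonempty n with _ | _
  · exact ⟨0, Subsingleton.elim _ _⟩
  -- `u i / v i` is the largest `s` with `0 ≤ u - s • v`, so this difference vanishes at `i`.
  obtain ⟨i, hmin⟩ := Finite.exists_min fun i ↦ u i / v i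
  have hdiff_nonneg : 0 ≤ u - (u i / v i) • v := fun j ↦
    sub_nonneg.2 ((le_div_iff₀ (hv j)).1 (hmin j))
  have hdiff_eigen : N *ᵥ (u - (u i / v i) • v) = c • (u - (u i / v i) • v) := by
    rw [mulVec_sub, mulVec_smul, hNu, hNv, smul_sub, smul_comm]
  have hdiff_apply : (u - (u i / v i) • v) i = 0 :=
    sub_eq_zero.2 (div_mul_cancel₀ (u i) (hv i).ne').symm
  exact ⟨u i / v i, sub_eq_zero.1 <|
    eq_zero_of_nonneg_of_mulVec_eq_smul_of_apply_eq_zero hN hdiff_nonneg hdiff_eigen hdiff_apply⟩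

theorem apply_mul_apply_swap_of_mul_self_eq_smul (hN : ∀ i j, 0 < N i j) (hsq : N * N = c • N)
    (i j : n) : N i j * N j i = N i i * N j j := by
  have hcol (k : n) : N *ᵥ N.col k = c • N.col k := funext fun l ↦ congrFun₂ hsq l k
  obtain ⟨s, hs⟩ := exists_eq_smul_of_mulVec_eq_smul hN (fun l ↦ hN l i) (hcol j) (hcol i)
  have hs_apply (l : n) : N l j = s * N l i := congrFun hs l
  rw [hs_apply i, hs_apply j]
  ring

end Positive

theorem pow_succ_eq_smul_of_mul_self_eq_smul {R A : Type*} [CommSemiring R] [Semiring A]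
    [Algebra R A] {x : A} {c : R} (hx : x * x = c • x) (k : ℕ) : x ^ (k + 1) = c ^ k • x := by
  induction k with
  | zero => simp
  | succ k ih => rw [pow_succ, ih, smul_mul_assoc, hx, smul_smul, ← pow_succ]

theorem sub_smul_one_mul_self_eq_smul {R A : Type*} [CommRing R] [Ring A] [Algebra R A] {x : A}
    {p q : R} (hx : (x - p • 1) * (x - q • 1) = 0) :
    (x - p • 1) * (x - p • 1) = (q - p) • (x - p • 1) := by
  have hsplit : x - p • 1 = (x - q • 1) + (q - p) • 1 := by module
  calc (x - p • 1) * (x - p • 1)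
      = (x - p • 1) * ((x - q • 1) + (q - p) • 1) := by rw [← hsplit]
    _ = (q - p) • (x - p • 1) := by rw [mul_add, hx, zero_add, mul_smul_comm, mul_one]

theorem neg_of_sub_smul_one_mul_sub_smul_one_eq_zero {n R : Type*} [Fintype n] [DecidableEq n]
    [CommRing R] [LinearOrder R] [IsStrictOrderedRing R] {B : Matrix n n R} {p q : R}
    (hsymm : B.IsSymm) (hdiag : ∀ i, B i i = 0) (hB : B ≠ 0) (hpq : p ≤ q)
    (hquad : (B - p • 1) * (B - q • 1) = 0) : p < 0 := by
  obtain ⟨i, j, hij⟩ : ∃ i j, B i j ≠ 0 := by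
    by_contra! hzero
    exact hB (Matrix.ext hzero)
  have hi_ne_j : i ≠ j := fun h ↦ hij (h ▸ hdiag i)
  have hN_symm : (B - p • 1).IsSymm := hsymm.sub (isSymm_one.smul p)
  have hdiag_sq : ∑ k, (B - p • 1) i k ^ 2 = (q - p) * -p := by
    calc ∑ k, (B - p • 1) i k ^ 2
        = ((B - p • 1) * (B - p • 1)) i i := by simp only [mul_apply, sq, hN_symm.apply i]
      _ = (q - p) * -p := by simp [sub_smul_one_mul_self_eq_smul hquad, hdiag]
  have hdiag_sq_pos : 0 < ∑ k, (B - p • 1) i k ^ 2 :=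
    Finset.sum_pos' (fun k _ ↦ sq_nonneg _)
      ⟨j, Finset.mem_univ j, by simpa [hi_ne_j] using sq_pos_of_ne_zero hij⟩
  exact neg_pos.1 (pos_of_mul_pos_right (hdiag_sq ▸ hdiag_sq_pos) (sub_nonneg.2 hpq))

theorem length_mapPath {U V : Type*} [Quiver U] [Quiver V] (F : U ⥤q V) {i j : U}
    (path : Quiver.Path i j) : (F.mapPath path).length = path.length := by
  induction path with
  | nil => rfl
  | cons _ _ ih => exact congrArg (· + 1) ih

section Irreducible

variable {n R : Type*}

theorem isIrreducible_of_forall_pos_imp_pos [Ring R] [LinearOrder R] {A B : Matrix n n R}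
    (hA : A.IsIrreducible) (hB : ∀ i j, 0 ≤ B i j) (hAB : ∀ i j, 0 < A i j → 0 < B i j) :
    B.IsIrreducible := by
  refine ⟨hB, fun i j ↦ ?_⟩
  obtain ⟨path, hlength⟩ := hA.connected i j
  let inclusion : @Prefunctor n A.toQuiver n B.toQuiver :=
    @Prefunctor.mk n A.toQuiver n B.toQuiver id fun e ↦ ⟨hAB _ _ e.down⟩
  refine ⟨@Prefunctor.mapPath n A.toQuiver n B.toQuiver inclusion i j path, ?_⟩
  rwa [@length_mapPath n n A.toQuiver B.toQuiver]

theorem isIrreducible_adjMatrix [Nontrivial n] [Ring R] [LinearOrder R] [IsStrictOrderedRing R]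
    {G : SimpleGraph n} [DecidableRel G.Adj] (hG : G.Preconnected) :
    (G.adjMatrix R).IsIrreducible := by
  have hnonneg (i j : n) : 0 ≤ G.adjMatrix R i j := by
    rw [SimpleGraph.adjMatrix_apply]
    split_ifs <;> simp
  let : Quiver n := (G.adjMatrix R).toQuiver
  have arrow {i j : n} (h : G.Adj i j) : i ⟶ j := ⟨by simp [h]⟩
  have exists_path (i j : n) : Nonempty (Quiver.Path i j) := by
    obtain ⟨walk⟩ := hG i j
    induction walk with
    | nil => exact ⟨.nil⟩
    | cons h _ ih => exact ih.map (arrow h).toPath.comp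
  refine ⟨hnonneg, fun i j ↦ ?_⟩
  obtain ⟨k, hjk⟩ := hG.exists_adj_of_nontrivial j
  obtain ⟨path⟩ := exists_path i k
  exact ⟨path.cons (arrow hjk.symm), Nat.succ_pos _⟩

variable [Fintype n]

theorem apply_pos_of_isIrreducible_of_mul_self_eq_smul [CommRing R] [LinearOrder R]
    [IsStrictOrderedRing R] {N : Matrix n n R} {c : R}
    (hN : N.IsIrreducible) (hsq : N * N = c • N) (i j : n) : 0 < N i j := by
  classical
  obtain ⟨k, hk, hpos⟩ := (isIrreducible_iff_exists_pow_pos hN.nonneg).1 hN i j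
  obtain ⟨k, rfl⟩ := Nat.exists_eq_add_one.2 hk
  rw [pow_succ_eq_smul_of_mul_self_eq_smul hsq, Matrix.smul_apply] at hpos
  exact (hN.nonneg i j).lt_of_ne' (right_ne_zero_of_smul hpos.ne')

variable [Field R] [LinearOrder R] [IsStrictOrderedRing R]

theorem apply_eq_of_isIrreducible_of_mul_self_eq_smul {N : Matrix n n R} {c d : R}
    (hN : N.IsIrreducible) (hsymm : N.IsSymm) (hsq : N * N = c • N) (hdiag : ∀ i, N i i = d)
    (i j : n) : N i j = d := by
  have hpos := apply_pos_of_isIrreducible_of_mul_self_eq_smul hN hsq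
  have hprod := apply_mul_apply_swap_of_mul_self_eq_smul hpos hsq i j
  rw [hsymm.apply i j, hdiag, hdiag] at hprod
  exact (mul_self_inj (hpos i j).le (hdiag i ▸ (hpos i i).le)).1 hprod

theorem eq_neg_smul_of_sub_smul_one_mul_sub_smul_one_eq_zero [DecidableEq n] {B : Matrix n n R}
    {p q : R} (hirr : B.IsIrreducible) (hsymm : B.IsSymm) (hdiag : ∀ i, B i i = 0) (hp : p < 0)
    (hquad : (B - p • 1) * (B - q • 1) = 0) : B = -p • (of (fun _ _ ↦ 1) - 1) := by
  have hN_diag (i : n) : (B - p • 1) i i = -p := by simp [hdiag]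
  have hN_ge (i j : n) : B i j ≤ (B - p • 1) i j := by
    rcases eq_or_ne i j with rfl | hij
    · simpa using hp.le
    · simp [hij]
  have hN_irr : (B - p • 1).IsIrreducible :=
    isIrreducible_of_forall_pos_imp_pos hirr (fun i j ↦ (hirr.nonneg i j).trans (hN_ge i j))
      fun i j h ↦ h.trans_le (hN_ge i j)
  have hN_symm : (B - p • 1).IsSymm := hsymm.sub (isSymm_one.smul p)
  have hN_apply := apply_eq_of_isIrreducible_of_mul_self_eq_smul hN_irr hN_symm
    (sub_smul_one_mul_self_eq_smul hquad) hN_diag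
  have hN : B - p • 1 = -p • of (fun _ _ ↦ 1) := by
    ext i j
    simp [-Matrix.sub_apply, hN_apply]
  rw [smul_sub, ← hN]
  module

end Irreducible

theorem sub_smul_one_mul_sub_smul_one_eq_zero_of_spectrum_subset {A : Type*} [TopologicalSpace A]
    [Ring A] [StarRing A] [Algebra ℝ A] [ContinuousFunctionalCalculus ℝ A IsSelfAdjoint] {x : A}
    (hx : IsSelfAdjoint x) {a b : ℝ} (hspec : spectrum ℝ x ⊆ {a, b}) :
    (x - a • 1) * (x - b • 1) = 0 := by
  open Polynomial in
  calc (x - a • 1) * (x - b • 1) = aeval x ((X - C a) * (X - C b)) := by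
        simp [Algebra.algebraMap_eq_smul_one]
    _ = cfc (fun t : ℝ ↦ ((X - C a) * (X - C b)).eval t) x := (cfc_polynomial _ x hx).symm
    _ = cfc (fun _ : ℝ ↦ 0) x := by
        refine cfc_congr fun t ht ↦ ?_
        rcases hspec ht with rfl | rfl <;> simp
    _ = 0 := cfc_const_zero ℝ x

theorem isEigenval_iff_mem_spectrum {n : Type*} [Fintype n] [DecidableEq n] {B : Matrix n n ℝ}
    {θ : ℝ} : IsEigenval B θ ↔ θ ∈ spectrum ℝ B := by
  rw [← spectrum_toLin', ← Module.End.hasEigenvalue_iff_mem_spectrum]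
  simp only [IsEigenval, Module.End.hasEigenvalue_iff, Submodule.ne_bot_iff,
    Module.End.mem_eigenspace_iff, toLin'_apply, and_comm]

theorem exists_le_subset_pair_of_not_exists_three {α : Type*} [Nonempty α] [LinearOrder α]
    {s : Set α} (hs : ¬∃ a b c, a ≠ b ∧ a ≠ c ∧ b ≠ c ∧ a ∈ s ∧ b ∈ s ∧ c ∈ s) :
    ∃ a b, a ≤ b ∧ s ⊆ {a, b} := by
  suffices h : ∃ a b, s ⊆ {a, b} by
    obtain ⟨a, b, hab⟩ := h
    rcases le_total a b with hle | hle
    · exact ⟨a, b, hle, hab⟩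
    · exact ⟨b, a, hle, Set.pair_comm a b ▸ hab⟩
  by_contra! hpair
  obtain ⟨x⟩ := ‹Nonempty α›
  obtain ⟨a, ha, -⟩ := Set.not_subset.1 (hpair x x)
  obtain ⟨b, hb, hba⟩ := Set.not_subset.1 (hpair a a)
  obtain ⟨c, hc, hcab⟩ := Set.not_subset.1 (hpair a b)
  exact hs ⟨a, b, c, by grind⟩

theorem exists_three_isEigenval_of_isIrreducible {n : Type*} [Fintype n] [DecidableEq n]
    {B : Matrix n n ℝ} (hirr : B.IsIrreducible) (hsymm : B.IsSymm)
    (hdiag : ∀ i, B i i = 0) (hB : ∀ c : ℝ, B ≠ c • (of (fun _ _ ↦ 1) - 1)) :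
    ∃ a b c : ℝ, a ≠ b ∧ a ≠ c ∧ b ≠ c ∧ IsEigenval B a ∧ IsEigenval B b ∧ IsEigenval B c := by
  simp only [isEigenval_iff_mem_spectrum]
  by_contra hthree
  obtain ⟨p, q, hpq, hspec⟩ := exists_le_subset_pair_of_not_exists_three hthree
  have hquad := sub_smul_one_mul_sub_smul_one_eq_zero_of_spectrum_subset hsymm hspec
  have hne : B ≠ 0 := by simpa using hB 0
  have hp := neg_of_sub_smul_one_mul_sub_smul_one_eq_zero hsymm hdiag hne hpq hquad
  exact hB (-p) (eq_neg_smul_of_sub_smul_one_mul_sub_smul_one_eq_zero hirr hsymm hdiag hp hquad)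

theorem stmt0_general {V : Type*} [Fintype V] [DecidableEq V] (G : SimpleGraph V)
    [DecidableRel G.Adj] (hconn : G.Preconnected) (M : Matrix V V ℝ) (hsymm : M.IsSymm)
    (hnonneg : ∀ x y : V, 0 ≤ M x y)
    (hzero : ∀ x y : V, (x = y ∨ G.Adj x y) → M x y = 0)
    (hne : M + G.adjMatrix ℝ ≠ Matrix.of (fun _ _ => (1 : ℝ)) - 1) :
    ∃ a b c : ℝ, a ≠ b ∧ a ≠ c ∧ b ≠ c ∧
      IsEigenval (M + G.adjMatrix ℝ) a ∧ IsEigenval (M + G.adjMatrix ℝ) b ∧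
      IsEigenval (M + G.adjMatrix ℝ) c := by
  have hdiag (x : V) : (M + G.adjMatrix ℝ) x x = 0 := by simp [hzero x x (.inl rfl)]
  have hedge {x y : V} (h : G.Adj x y) : (M + G.adjMatrix ℝ) x y = 1 := by
    simp [hzero x y (.inr h), h]
  rcases subsingleton_or_nontrivial V with _ | _
  · refine absurd (Matrix.ext fun x y ↦ ?_) hne
    simp [Subsingleton.elim y x, hdiag, -Matrix.add_apply]
  have hA := isIrreducible_adjMatrix (R := ℝ) hconn
  have hirr : (M + G.adjMatrix ℝ).IsIrreducible :=
    isIrreducible_of_forall_pos_imp_pos hA (fun x y ↦ add_nonneg (hnonneg x y) (hA.nonneg x y))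
      fun x y h ↦ add_pos_of_nonneg_of_pos (hnonneg x y) h
  refine exists_three_isEigenval_of_isIrreducible hirr (hsymm.add (G.isSymm_adjMatrix (α := ℝ)))
    hdiag fun c hc ↦ hne ?_
  obtain ⟨x⟩ := ‹Nontrivial V›.to_nonempty
  obtain ⟨y, hxy⟩ := hconn.exists_adj_of_nontrivial x
  have hc_one : 1 = c := by
    simpa [hedge hxy, hxy.ne, -Matrix.add_apply] using congrFun₂ hc x y
  rw [hc, ← hc_one, one_smul]

/-- Let `G` be a connected graph on `n ≥ 3` vertices with adjacency matrix `A`, and `M` a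
symmetric nonnegative irreducible matrix with `M x y = 0` whenever `x = y` or `x ~ y`.
If `B = M + A ≠ J - I`, then `B` has at least three distinct eigenvalues. -/
theorem stmt0 {V : Type*} [Fintype V] [DecidableEq V] (G : SimpleGraph V) [DecidableRel G.Adj]
    (hconn : G.Connected) (hcard : 3 ≤ Fintype.card V)
    (M : Matrix V V ℝ) (hsymm : M.IsSymm)
    (hnonneg : ∀ x y : V, 0 ≤ M x y)
    (hirr : ∀ x y : V, ∃ m : ℕ, 0 < m ∧ 0 < (M ^ m) x y)
    (hzero : ∀ x y : V, (x = y ∨ G.Adj x y) → M x y = 0)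
    (hne : M + G.adjMatrix ℝ ≠ Matrix.of (fun _ _ => (1 : ℝ)) - 1) :
    ∃ a b c : ℝ, a ≠ b ∧ a ≠ c ∧ b ≠ c ∧
      IsEigenval (M + G.adjMatrix ℝ) a ∧ IsEigenval (M + G.adjMatrix ℝ) b ∧
      IsEigenval (M + G.adjMatrix ℝ) c := by
  exact stmt0_general G hconn.preconnected M hsymm hnonneg hzero hne
end

section
/- Let G be a connected non-complete finite simple graph and let q be a nonzero real number. Then the q-distance matrix 𝔻_q of G has all entries nonnegative and is irreducible if and only if q > 0 or q ≤ −1. -/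
/-- The `q`-distance matrix of a graph `G`: the `(x,y)` entry is
`1 + 1/q + ⋯ + 1/q^(d(x,y)-1) = ∑_{j=0}^{d(x,y)-1} q^{-j}` (and `0` on the diagonal,
since `d(x,x) = 0`). -/
noncomputable def qDistMatrix {V : Type*} [Fintype V] (G : SimpleGraph V) (q : ℝ) : Matrix V V ℝ :=
  Matrix.of fun x y => ∑ j ∈ Finset.range (G.dist x y), (1 / q) ^ j

/-!
Put `t = 1 / q`. A non-complete connected graph has two vertices at distance `2`, where the
`q`-distance matrix has the entry `1 + t`; so nonnegativity forces `-1 ≤ t`. Conversely, every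
geometric sum `1 + t + ⋯ + t ^ (n - 1)` with `-1 ≤ t` is nonnegative. Irreducibility then comes
for free: the entries at adjacent vertices are `1`, so every walk in `G` is a path along positive
entries. Finally, `-1 ≤ 1 / q` means `0 < q` or `q ≤ -1`.
-/

lemma geom_sum_nonneg_of_neg_one_le {R : Type*} [Ring R] [LinearOrder R] [IsStrictOrderedRing R]
    {t : R} (ht : -1 ≤ t) (n : ℕ) : 0 ≤ ∑ i ∈ Finset.range n, t ^ i := by
  obtain rfl | hn := eq_or_ne n 0
  · simp
  · have : 0 ≤ t + 1 := neg_le_iff_add_nonneg.1 ht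
    exact not_lt.1 fun hneg => this.not_gt ((geom_sum_neg_iff hn).1 hneg).2

lemma neg_one_le_one_div_iff {K : Type*} [Field K] [LinearOrder K] [IsStrictOrderedRing K]
    {q : K} (hq : q ≠ 0) : -1 ≤ 1 / q ↔ 0 < q ∨ q ≤ -1 := by
  obtain hneg | hpos := hq.lt_or_gt
  · rw [le_one_div_of_neg (by simp) hneg]
    simp [hneg.not_gt]
  · have : -1 ≤ 1 / q := neg_one_lt_zero.le.trans (one_div_pos.2 hpos).le
    simp only [this, hpos, true_or]

section Graph

variable {V : Type*} {G : SimpleGraph V}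

lemma exists_dist_eq_two_of_not_adj {x y : V} (hxy : G.Reachable x y) (hne : x ≠ y)
    (hadj : ¬ G.Adj x y) : ∃ a b, G.dist a b = 2 := by
  obtain ⟨p, hp⟩ := hxy.exists_walk_length_eq_dist
  obtain ⟨a, c, b, hac, hcb, hnab, hab⟩ :=
    p.exists_adj_adj_not_adj_ne hp (hxy.one_lt_dist_of_ne_of_not_adj hne hadj)
  have : G.edist a b = 2 := SimpleGraph.edist_eq_two_iff.2 ⟨hab, hnab, c, hac, hcb.symm⟩
  exact ⟨a, b, by simp [SimpleGraph.dist, this]⟩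

lemma isIrreducible_of_forall_adj_pos {R : Type*} [Ring R] [LinearOrder R] [Nontrivial V]
    (hG : G.Preconnected) {A : Matrix V V R} (hA : ∀ x y, 0 ≤ A x y)
    (hpos : ∀ x y, G.Adj x y → 0 < A x y) : A.IsIrreducible := by
  let : Quiver V := A.toQuiver
  let edge {x y : V} (hxy : G.Adj x y) : x ⟶ y := ⟨hpos x y hxy⟩
  have hpath {x y : V} (p : G.Walk x y) : Nonempty (Quiver.Path x y) := by
    induction p with
    | nil => exact ⟨.nil⟩
    | cons hadj _ ih => exact ih.map (edge hadj).toPath.comp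
  have hconn : Quiver.IsStronglyConnected V := fun x y => (hG x y).elim hpath
  obtain ⟨x⟩ : Nonempty V := inferInstance
  obtain ⟨y, hxy⟩ := hG.exists_adj_of_nontrivial x
  exact ⟨hA, hconn.isSStronglyConnected_of_hom (edge hxy)⟩

end Graph

section QDistMatrix

variable {V : Type*} [Fintype V] {G : SimpleGraph V} {q : ℝ}

lemma qDistMatrix_apply_of_adj {x y : V} (h : G.Adj x y) : qDistMatrix G q x y = 1 := by
  simp [qDistMatrix, SimpleGraph.dist_eq_one_iff_adj.2 h]

lemma qDistMatrix_apply_of_dist_eq_two {x y : V} (h : G.dist x y = 2) :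
    qDistMatrix G q x y = 1 / q + 1 := by
  simp only [qDistMatrix, Matrix.of_apply, h, geom_sum_two]

theorem qDistMatrix_nonneg_iff (hG : ∃ x y, G.dist x y = 2) :
    (∀ x y, 0 ≤ qDistMatrix G q x y) ↔ -1 ≤ 1 / q := by
  refine ⟨fun h => ?_, fun hq x y => geom_sum_nonneg_of_neg_one_le hq _⟩
  obtain ⟨x, y, hxy⟩ := hG
  have : 0 ≤ 1 / q + 1 := qDistMatrix_apply_of_dist_eq_two hxy ▸ h x y
  exact neg_le_iff_add_nonneg.2 this

theorem qDistMatrix_isIrreducible_iff_nonneg [Nontrivial V] (hG : G.Preconnected) :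
    (qDistMatrix G q).IsIrreducible ↔ ∀ x y, 0 ≤ qDistMatrix G q x y :=
  ⟨fun h => h.nonneg, fun h => isIrreducible_of_forall_adj_pos hG h fun _ _ hxy =>
    (qDistMatrix_apply_of_adj hxy).symm ▸ one_pos⟩

end QDistMatrix

/-- For a connected non-complete graph `G` and `q ≠ 0`, the `q`-distance matrix has all
entries nonnegative and is irreducible iff `q > 0` or `q ≤ -1`. -/
theorem stmt1 {V : Type*} [Fintype V] [DecidableEq V] (G : SimpleGraph V)
    (hconn : G.Connected) (hnc : ∃ x y : V, x ≠ y ∧ ¬ G.Adj x y)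
    (q : ℝ) (hq : q ≠ 0) :
    ((∀ x y : V, 0 ≤ qDistMatrix G q x y) ∧
        ∀ x y : V, ∃ m : ℕ, 0 < m ∧ 0 < ((qDistMatrix G q) ^ m) x y) ↔
      (0 < q ∨ q ≤ -1) := by
  obtain ⟨x, y, hne, hadj⟩ := hnc
  have : Nontrivial V := ⟨x, y, hne⟩
  have hdist : ∃ a b, G.dist a b = 2 := exists_dist_eq_two_of_not_adj (hconn x y) hne hadj
  have hirr := qDistMatrix_isIrreducible_iff_nonneg (q := q) hconn.preconnected
  rw [← neg_one_le_one_div_iff hq, ← qDistMatrix_nonneg_iff hdist, and_iff_left_iff_imp]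
  exact fun hnonneg => (Matrix.isIrreducible_iff_exists_pow_pos hnonneg).1 (hirr.2 hnonneg)
end

section
/- Let G be a connected non-complete finite simple graph and let q be a real number with q ≥ 1 or q ≤ −2. Then the function (x,y) ↦ (𝔻_q)_{xy} given by the q-distance matrix of G is a metric on the vertex set of G: it is symmetric, (𝔻_q)_{xy} = 0 if and only if x = y, and (𝔻_q)_{xy} + (𝔻_q)_{yz} ≥ (𝔻_q)_{xz} for all vertices x, y, z. -/
/-!
With `r = 1 / q` the hypothesis on `q` says that `r ∈ [-1/2, 1]`, `r ≠ 0`. For `0 ≤ r` the partial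
sums `s n = 1 + r + ⋯ + r ^ (n - 1)` are monotone and subadditive in `n`, so `s ∘ d` inherits the
triangle inequality of `d`. For `-1/2 ≤ r ≤ 0` they all satisfy `1/2 ≤ 1 + r ≤ s n ≤ 1` when
`0 < n`, and any function with off-diagonal values in `[1/2, 1]` satisfies the triangle inequality.
-/

section GeomSum

open Finset

theorem geom_sum_add_le {R : Type*} [Semiring R] [PartialOrder R] [IsOrderedRing R] {r : R}
    (h0 : 0 ≤ r) (h1 : r ≤ 1) (a b : ℕ) :
    ∑ j ∈ range (a + b), r ^ j ≤ ∑ j ∈ range a, r ^ j + ∑ j ∈ range b, r ^ j := by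
  rw [sum_range_add]
  gcongr _ + ∑ j ∈ range b, ?_ with j
  exact pow_le_pow_of_le_one h0 h1 (Nat.le_add_left j a)

variable {R : Type*} [Ring R] [LinearOrder R] [IsStrictOrderedRing R] {r : R}

theorem geom_sum_nonneg_of_neg_one_le_s2 (hr : -1 ≤ r) (n : ℕ) : 0 ≤ ∑ j ∈ range n, r ^ j := by
  rcases eq_or_ne n 0 with rfl | hn
  · simp
  rcases hr.eq_or_lt with rfl | hr
  · rw [neg_one_geom_sum]
    split_ifs <;> simp
  · exact (geom_sum_pos' (neg_lt_iff_pos_add.1 hr) hn).le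

theorem geom_sum_le_one_of_nonpos (hr : -1 ≤ r) (h0 : r ≤ 0) (n : ℕ) :
    ∑ j ∈ range n, r ^ j ≤ 1 := by
  cases n with
  | zero => simp
  | succ n =>
    rw [geom_sum_succ]
    exact add_le_of_nonpos_left
      (mul_nonpos_of_nonpos_of_nonneg h0 (geom_sum_nonneg_of_neg_one_le_s2 hr n))

theorem one_add_le_geom_sum_of_nonpos (hr : -1 ≤ r) (h0 : r ≤ 0) {n : ℕ} (hn : n ≠ 0) :
    1 + r ≤ ∑ j ∈ range n, r ^ j := by
  obtain ⟨n, rfl⟩ := Nat.exists_eq_succ_of_ne_zero hn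
  rw [geom_sum_succ, add_comm]
  gcongr
  simpa using mul_le_mul_of_nonpos_left (geom_sum_le_one_of_nonpos hr h0 n) h0

theorem geom_sum_le_add (hr : -1 ≤ 2 * r) (h1 : r ≤ 1) {a b c : ℕ} (ha : a ≠ 0) (hb : b ≠ 0)
    (hc : c ≤ a + b) :
    ∑ j ∈ range c, r ^ j ≤ ∑ j ∈ range a, r ^ j + ∑ j ∈ range b, r ^ j := by
  rcases le_total 0 r with h0 | h0
  · calc ∑ j ∈ range c, r ^ j
      _ ≤ ∑ j ∈ range (a + b), r ^ j :=
        sum_le_sum_of_subset_of_nonneg (range_subset_range.2 hc) fun j _ _ => pow_nonneg h0 j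
      _ ≤ _ := geom_sum_add_le h0 h1 a b
  · have hr' : -1 ≤ r := hr.trans (by rw [two_mul]; exact add_le_of_nonpos_left h0)
    calc ∑ j ∈ range c, r ^ j
      _ ≤ 1 := geom_sum_le_one_of_nonpos hr' h0 c
      _ = 2 + -1 := by norm_num
      _ ≤ 2 + 2 * r := by gcongr
      _ = (1 + r) + (1 + r) := by rw [← two_mul, mul_add, mul_one]
      _ ≤ ∑ j ∈ range a, r ^ j + ∑ j ∈ range b, r ^ j :=
        add_le_add (one_add_le_geom_sum_of_nonpos hr' h0 ha)
          (one_add_le_geom_sum_of_nonpos hr' h0 hb)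

end GeomSum

section GeomDist

variable {V R : Type*} {G : SimpleGraph V}

/-- The `q`-distance of two vertices for `q = 1 / r`, on a possibly infinite graph. Taking `r` as
the parameter avoids division and adds the limit `q = ∞`: for `r = 0` and `G` connected this is the
discrete metric. -/
noncomputable def geomDist [Semiring R] (G : SimpleGraph V) (r : R) (x y : V) : R :=
  ∑ j ∈ Finset.range (G.dist x y), r ^ j

theorem geomDist_self [Semiring R] (r : R) (x : V) : geomDist G r x x = 0 := by
  simp [geomDist]

theorem geomDist_comm [Semiring R] (r : R) (x y : V) : geomDist G r x y = geomDist G r y x := by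
  rw [geomDist, geomDist, G.dist_comm]

variable [Ring R] [LinearOrder R] [IsStrictOrderedRing R] {r : R}

theorem geomDist_eq_zero_iff (hG : G.Connected) (hr : r ≠ -1) {x y : V} :
    geomDist G r x y = 0 ↔ x = y := by
  refine ⟨fun h => ?_, fun h => h ▸ geomDist_self r x⟩
  by_contra hxy
  exact geom_sum_ne_zero hr (hG.pos_dist_of_ne hxy).ne' h

theorem geomDist_triangle (hG : G.Connected) (hr : -1 ≤ 2 * r) (h1 : r ≤ 1) (x y z : V) :
    geomDist G r x z ≤ geomDist G r x y + geomDist G r y z := by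
  rcases eq_or_ne x y with rfl | hxy
  · rw [geomDist_self, zero_add]
  rcases eq_or_ne y z with rfl | hyz
  · rw [geomDist_self, add_zero]
  exact geom_sum_le_add hr h1 (hG.pos_dist_of_ne hxy).ne' (hG.pos_dist_of_ne hyz).ne'
    hG.dist_triangle

end GeomDist

theorem stmt2_general {V R : Type*} [Ring R] [LinearOrder R] [IsStrictOrderedRing R]
    {G : SimpleGraph V} {r : R} (hG : G.Connected) (hr : -1 ≤ 2 * r) (h1 : r ≤ 1) :
    (∀ x y : V, geomDist G r x y = geomDist G r y x) ∧
    (∀ x y : V, geomDist G r x y = 0 ↔ x = y) ∧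
    (∀ x y z : V, geomDist G r x z ≤ geomDist G r x y + geomDist G r y z) := by
  have hr' : r ≠ -1 := by
    rintro rfl
    norm_num at hr
  exact ⟨geomDist_comm r, fun _ _ => geomDist_eq_zero_iff hG hr', geomDist_triangle hG hr h1⟩

theorem neg_one_le_two_mul_one_div_and_one_div_le_one {K : Type*} [Field K] [LinearOrder K]
    [IsStrictOrderedRing K] {q : K} (hq : 1 ≤ q ∨ q ≤ -2) : -1 ≤ 2 * (1 / q) ∧ 1 / q ≤ 1 := by
  rcases hq with hq | hq
  · have hpos : 0 ≤ 1 / q := one_div_nonneg.2 (zero_le_one.trans hq)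
    exact ⟨by linarith, div_le_one_of_le₀ hq (zero_le_one.trans hq)⟩
  · have hneg : q < 0 := by linarith
    refine ⟨?_, (one_div_nonpos.2 hneg.le).trans zero_le_one⟩
    rw [mul_one_div, le_div_iff_of_neg hneg]
    linarith

/-- For a connected non-complete graph `G` and `q ≥ 1` or `q ≤ -2`, the entries of the
`q`-distance matrix define a metric on the vertex set: it is symmetric, vanishes exactly
on the diagonal, and satisfies the triangle inequality. -/
theorem stmt2 {V : Type*} [Fintype V] (G : SimpleGraph V)
    (hconn : G.Connected) (hnc : ∃ x y : V, x ≠ y ∧ ¬ G.Adj x y)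
    (q : ℝ) (hq : 1 ≤ q ∨ q ≤ -2) :
    (∀ x y : V, qDistMatrix G q x y = qDistMatrix G q y x) ∧
    (∀ x y : V, qDistMatrix G q x y = 0 ↔ x = y) ∧
    (∀ x y z : V, qDistMatrix G q x z ≤ qDistMatrix G q x y + qDistMatrix G q y z) := by
  obtain ⟨hr, h1⟩ := neg_one_le_two_mul_one_div_and_one_div_le_one hq
  exact stmt2_general hconn hr h1
end

section
/- Let Γ be a distance-regular graph of diameter D ≥ 2 and valency k on n ≥ 3 vertices, let q be a nonzero real number, and let θ ≠ k be an eigenvalue of the adjacency matrix of Γ of classical q-type. Then the q-distance matrix 𝔻_q of Γ has exactly three distinct eigenvalues, one of which is 0. Moreover, q > 0 or q ≤ −1 holds. -/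
/-- `G` is a distance-regular graph of diameter `D` with intersection numbers
`p h i j = p^h_{ij}`: for any two vertices `x, y` at distance `h`, the number of
vertices `z` with `d(x,z) = i` and `d(y,z) = j` equals `p h i j`. -/
structure IsDRG {V : Type*} [Fintype V] (G : SimpleGraph V) (D : ℕ)
    (p : ℕ → ℕ → ℕ → ℕ) : Prop where
  connected : G.Connected
  dist_le : ∀ x y : V, G.dist x y ≤ D
  exists_dist_eq : ∃ x y : V, G.dist x y = D
  inter : ∀ h i j : ℕ, h ≤ D → i ≤ D → j ≤ D → ∀ x y : V, G.dist x y = h →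
    {z : V | G.dist x z = i ∧ G.dist y z = j}.ncard = p h i j

/-- `u` is the standard sequence of `θ` for a distance-regular graph with
intersection numbers `p` (so valency `k = b₀ = p 0 1 1`, `cᵢ = p i 1 (i-1)`,
`aᵢ = p i 1 i`, `bᵢ = p i 1 (i+1)`). -/
def IsStdSeq (D : ℕ) (p : ℕ → ℕ → ℕ → ℕ) (θ : ℝ) (u : ℕ → ℝ) : Prop :=
  u 0 = 1 ∧ u 1 = θ / (p 0 1 1 : ℝ) ∧
    ∀ i : ℕ, 1 ≤ i → i ≤ D - 1 →
      (p i 1 (i - 1) : ℝ) * u (i - 1) + (p i 1 i : ℝ) * u i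
          + (p i 1 (i + 1) : ℝ) * u (i + 1) = θ * u i

/-- The sequence `u` (a standard sequence) is of classical `q`-type:
`u i = (1/q) * u (i-1) + c` for `i = 1, …, D`, for some real `c`. -/
def IsClassicalQType (D : ℕ) (q : ℝ) (u : ℕ → ℝ) : Prop :=
  ∃ c : ℝ, ∀ i : ℕ, 1 ≤ i → i ≤ D → u i = (1 / q) * u (i - 1) + c

/-- `θ` is an eigenvalue of the adjacency matrix of `G`. -/
def IsAdjEigenval {V : Type*} [Fintype V] (G : SimpleGraph V) [DecidableRel G.Adj]
    (θ : ℝ) : Prop :=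
  ∃ v : V → ℝ, v ≠ 0 ∧ (G.adjMatrix ℝ).mulVec v = θ • v

/-!
Write `U` for the matrix with entries `u_{d(x,y)}` and `J` for the all-ones matrix. Since `θ` is an
eigenvalue of `A`, multiplication by `A - θ` on the finite-dimensional Bose–Mesner algebra is not
injective, and the recurrence of the standard sequence forces every element of its kernel to be a
multiple of `U`. Hence `A U = θ U`, and as `U²` again lies in the kernel, `U² = μ U` with `μ > 0`.
From `θ ≠ k` one gets `J U = 0`, so `J / n` and `U / μ` are orthogonal idempotents, and they do not
add up to the identity because `u₁ ≠ u₂`. Summing the geometric recurrence of classical `q`-type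
gives `𝔻_q = (1 - u₁)⁻¹ (J - U)`, whose eigenvalues are therefore `n / (1 - u₁)`, `-μ / (1 - u₁)`
and `0`. As `U / μ` is an orthogonal projection, its entries are at most its diagonal ones, so
`(1 - u₁) (1 + 1 / q) = 1 - u₂ ≥ 0`, which is the bound on `q`.
-/

section Algebra

variable {K A : Type*} [Field K] [Ring A] [Algebra K A]

theorem exists_mem_mul_eq_smul_of_mem_spectrum (S : Subalgebra K A) [FiniteDimensional K S]
    {a : A} (ha : a ∈ S) {r : K} (hr : r ∈ spectrum K a) :
    ∃ x ∈ S, x ≠ 0 ∧ a * x = r • x := by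
  have hrS : r ∈ spectrum K (⟨a, ha⟩ : S) := spectrum.subset_subalgebra (⟨a, ha⟩ : S) hr
  have hr_lmul : r ∈ spectrum K (Algebra.lmul K S ⟨a, ha⟩) := by
    rwa [spectrum.mem_iff, ← AlgHom.commutes (Algebra.lmul K S), ← map_sub,
      Algebra.lmul_isUnit_iff, ← spectrum.mem_iff]
  obtain ⟨x, hx⟩ := (Module.End.HasEigenvalue.of_mem_spectrum hr_lmul).exists_hasEigenvector
  exact ⟨x, x.2, fun h => hx.2 (Subtype.ext h), congrArg Subtype.val hx.apply_eq_smul⟩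

theorem spectrum_sum_smul_of_completeOrthogonalIdempotents {I : Type*} [Fintype I] {e : I → A}
    (he : CompleteOrthogonalIdempotents e) (hne : ∀ i, e i ≠ 0) (a : I → K) :
    spectrum K (∑ i, a i • e i) = Set.range a := by
  classical
  have hmul (b c : I → K) : (∑ i, b i • e i) * ∑ i, c i • e i = ∑ i, (b i * c i) • e i := by
    simp [Finset.sum_mul_sum, he.mul_eq, smul_smul, mul_comm]
  have hres (r : K) : algebraMap K A r - ∑ i, a i • e i = ∑ i, (r - a i) • e i := by
    simp_rw [sub_smul, Finset.sum_sub_distrib, ← Finset.smul_sum, he.complete,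
      Algebra.algebraMap_eq_smul_one]
  ext r
  rw [spectrum.mem_iff, hres]
  constructor
  · contrapose!
    intro hr
    have hr' (i : I) : r - a i ≠ 0 := sub_ne_zero.2 fun h => hr ⟨i, h.symm⟩
    refine isUnit_iff_exists.2 ⟨∑ i, (r - a i)⁻¹ • e i, ?_, ?_⟩ <;>
      simp [hmul, hr', he.complete]
  · rintro ⟨i, rfl⟩ hunit
    refine hne i (hunit.mul_right_eq_zero.1 ?_)
    simp [Finset.sum_mul, he.mul_eq]

theorem spectrum_sum_smul_of_orthogonalIdempotents {I : Type*} [Fintype I] {e : I → A}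
    (he : OrthogonalIdempotents e) (hne : ∀ i, e i ≠ 0) (hsum : ∑ i, e i ≠ 1) (a : I → K) :
    spectrum K (∑ i, a i • e i) = insert 0 (Set.range a) := by
  have h := spectrum_sum_smul_of_completeOrthogonalIdempotents
    (CompleteOrthogonalIdempotents.option he)
    (Option.forall.2 ⟨sub_ne_zero.2 hsum.symm, hne⟩) (Option.elim · 0 a)
  simpa [Fintype.sum_option, Option.range_eq, Function.comp_def] using h

theorem spectrum_smul_add_smul {x y : A} {r s : K} (hxx : x * x = r • x) (hyy : y * y = s • y)
    (hxy : x * y = 0) (hyx : y * x = 0) (hx : x ≠ 0) (hy : y ≠ 0) (hr : r ≠ 0) (hs : s ≠ 0)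
    (hne : r⁻¹ • x + s⁻¹ • y ≠ 1) (a b : K) :
    spectrum K (a • x + b • y) = {a * r, b * s, 0} := by
  have he : OrthogonalIdempotents ![r⁻¹ • x, s⁻¹ • y] := by
    refine ⟨?_, ?_⟩
    · simp [Fin.forall_fin_two, IsIdempotentElem, hxx, hyy, smul_smul, hr, hs]
    · simp [Pairwise, Fin.forall_fin_two, hxy, hyx]
  have hsum : ∑ i, ![a * r, b * s] i • ![r⁻¹ • x, s⁻¹ • y] i = a • x + b • y := by
    simp [smul_smul, hr, hs]
  rw [← hsum, spectrum_sum_smul_of_orthogonalIdempotents he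
    (by simp [Fin.forall_fin_two, hx, hy, hr, hs]) (by simpa using hne)]
  ext
  simp [or_comm, or_assoc]

end Algebra

section Matrix

variable {n : Type*} [Fintype n]

theorem setOf_isEigenval_eq_spectrum [DecidableEq n] (M : Matrix n n ℝ) :
    {η : ℝ | IsEigenval M η} = spectrum ℝ M := by
  ext η
  rw [← Matrix.spectrum_toLin', ← Module.End.hasEigenvalue_iff_mem_spectrum]
  constructor
  · rintro ⟨v, hv, hMv⟩
    exact Module.End.hasEigenvalue_of_hasEigenvector ⟨Module.End.mem_eigenspace_iff.2 hMv, hv⟩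
  · intro h
    obtain ⟨v, hv⟩ := h.exists_hasEigenvector
    exact ⟨v, hv.2, hv.apply_eq_smul⟩

variable {R : Type*} [CommRing R] [LinearOrder R] [IsStrictOrderedRing R]

theorem pos_of_mul_self_eq_smul {M : Matrix n n R} (hM : M.IsSymm) {r : R}
    (h : M * M = r • M) {x : n} (hx : 0 < M x x) : 0 < r := by
  have hsum : r * M x x = ∑ z, M x z ^ 2 := by
    rw [← smul_eq_mul, ← Matrix.smul_apply, ← h, Matrix.mul_apply]
    exact Finset.sum_congr rfl fun z _ => by rw [hM.apply, sq]
  refine pos_of_mul_pos_left ?_ hx.le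
  rw [hsum]
  exact Finset.sum_pos' (fun z _ => sq_nonneg _) ⟨x, Finset.mem_univ x, pow_pos hx 2⟩

theorem two_mul_apply_le_of_mul_self_eq_smul {M : Matrix n n R} (hM : M.IsSymm) {r : R}
    (hr : 0 < r) (h : M * M = r • M) (x y : n) : 2 * M x y ≤ M x x + M y y := by
  have hsum (x y : n) : ∑ z, M x z * M y z = r * M x y := by
    rw [← smul_eq_mul, ← Matrix.smul_apply, ← h, Matrix.mul_apply]
    exact Finset.sum_congr rfl fun z _ => by rw [hM.apply y z]
  have hsq : ∑ z, (M x z - M y z) ^ 2 = r * (M x x + M y y - 2 * M x y) := by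
    calc ∑ z, (M x z - M y z) ^ 2
        = ∑ z, (M x z * M x z + M y z * M y z - 2 * (M x z * M y z)) :=
          Finset.sum_congr rfl fun z _ => by ring
      _ = r * (M x x + M y y - 2 * M x y) := by
          rw [Finset.sum_sub_distrib, Finset.sum_add_distrib, ← Finset.mul_sum]
          simp only [hsum]
          ring
  have hnonneg : 0 ≤ r * (M x x + M y y - 2 * M x y) :=
    hsq ▸ Finset.sum_nonneg fun z _ => sq_nonneg _
  linarith [nonneg_of_mul_nonneg_right hnonneg hr]

end Matrix

theorem exists_dist_eq_and_dist_eq_sub {V : Type*} {G : SimpleGraph V} (hG : G.Connected)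
    {x y : V} {i : ℕ} (hi : i ≤ G.dist x y) :
    ∃ z, G.dist x z = i ∧ G.dist z y = G.dist x y - i := by
  obtain ⟨w, hw⟩ := hG.exists_walk_length_eq_dist x y
  refine ⟨w.getVert i, ?_, ?_⟩
  · rw [← SimpleGraph.length_eq_dist_of_subwalk hw (w.isSubwalk_take i),
      SimpleGraph.Walk.take_length, hw, min_eq_left hi]
  · rw [← SimpleGraph.length_eq_dist_of_subwalk hw (w.isSubwalk_drop i),
      SimpleGraph.Walk.drop_length, hw]

/-- The matrix whose `(x, y)` entry is `f (d(x, y))`. The distance matrices `A_i` of the theory of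
distance-regular graphs are the case where `f` is the indicator function of `i`. -/
noncomputable def distMatrix {V R : Type*} (G : SimpleGraph V) (f : ℕ → R) : Matrix V V R :=
  Matrix.of fun x y => f (G.dist x y)

section DistMatrix

variable {V R : Type*} (G : SimpleGraph V)

@[simp]
theorem distMatrix_apply (f : ℕ → R) (x y : V) : distMatrix G f x y = f (G.dist x y) := rfl

theorem distMatrix_zero [Zero R] : distMatrix G (0 : ℕ → R) = 0 := rfl

theorem distMatrix_add [Add R] (f g : ℕ → R) :
    distMatrix G (f + g) = distMatrix G f + distMatrix G g := rfl

theorem distMatrix_smul {S : Type*} [SMul S R] (c : S) (f : ℕ → R) :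
    distMatrix G (c • f) = c • distMatrix G f := rfl

theorem isSymm_distMatrix (f : ℕ → R) : (distMatrix G f).IsSymm :=
  Matrix.IsSymm.ext fun x y => by simp only [distMatrix_apply, G.dist_comm]

theorem adjMatrix_eq_distMatrix [DecidableRel G.Adj] [Zero R] [One R] :
    G.adjMatrix R = distMatrix G (Pi.single 1 1) := by
  ext x y
  simp [SimpleGraph.adjMatrix_apply, Pi.single_apply]

theorem algebraMap_eq_distMatrix [Fintype V] [DecidableEq V] [CommSemiring R] (hG : G.Connected)
    (c : R) :
    algebraMap R (Matrix V V R) c = distMatrix G (Pi.single 0 c) := by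
  ext x y
  simp [Matrix.algebraMap_matrix_apply, Pi.single_apply, hG.dist_eq_zero_iff]

theorem distMatrix_one_mul_self [Fintype V] [Semiring R] :
    distMatrix G (1 : ℕ → R) * distMatrix G 1 = (Fintype.card V : R) • distMatrix G 1 := by
  ext x y
  simp [Matrix.mul_apply]

end DistMatrix

namespace IsDRG

variable {V : Type*} [Fintype V] {G : SimpleGraph V} {D : ℕ} {p : ℕ → ℕ → ℕ → ℕ}

theorem exists_dist_eq_of_le (hG : IsDRG G D p) {h : ℕ} (hh : h ≤ D) :
    ∃ x y : V, G.dist x y = h := by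
  obtain ⟨x, y, rfl⟩ := hG.exists_dist_eq
  obtain ⟨z, hz, -⟩ := exists_dist_eq_and_dist_eq_sub hG.connected hh
  exact ⟨x, z, hz⟩

theorem distMatrix_inj {R : Type*} (hG : IsDRG G D p) {f g : ℕ → R} :
    distMatrix G f = distMatrix G g ↔ ∀ h ≤ D, f h = g h := by
  constructor
  · intro hfg h hh
    obtain ⟨x, y, rfl⟩ := hG.exists_dist_eq_of_le hh
    exact congrFun₂ hfg x y
  · intro hfg
    ext x y
    exact hfg _ (hG.dist_le x y)

theorem inter_eq_zero (hG : IsDRG G D p) {h i j : ℕ} (hh : h ≤ D) (hi : i ≤ D) (hj : j ≤ D)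
    (htri : i + j < h ∨ h + j < i ∨ h + i < j) : p h i j = 0 := by
  obtain ⟨x, y, hxy⟩ := hG.exists_dist_eq_of_le hh
  rw [← hG.inter h i j hh hi hj x y hxy, Set.ncard_eq_zero, Set.eq_empty_iff_forall_notMem]
  rintro z ⟨hxz, hyz⟩
  have hx := hG.connected.dist_triangle (u := x) (v := y) (w := z)
  have hy := hG.connected.dist_triangle (u := y) (v := x) (w := z)
  have hz := hG.connected.dist_triangle (u := x) (v := z) (w := y)
  rw [G.dist_comm (u := y) (v := x)] at hy
  rw [G.dist_comm (u := z)] at hz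
  omega

theorem inter_one_succ_ne_zero (hG : IsDRG G D p) {i : ℕ} (hi : i < D) : p i 1 (i + 1) ≠ 0 := by
  obtain ⟨x, y, hxy⟩ := hG.exists_dist_eq_of_le (Nat.succ_le_of_lt hi)
  have h1 : 1 ≤ G.dist x y := hxy ▸ Nat.le_add_left 1 i
  obtain ⟨z, hxz, hzy⟩ := exists_dist_eq_and_dist_eq_sub hG.connected h1
  rw [hxy, Nat.succ_sub_one] at hzy
  rw [← hG.inter i 1 (i + 1) hi.le (by omega) hi z y hzy]
  exact Set.ncard_ne_zero_of_mem (a := x)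
    ⟨by rw [G.dist_comm, hxz], by rw [G.dist_comm, hxy]⟩

theorem isRegularOfDegree [DecidableRel G.Adj] (hG : IsDRG G D p) (hD : 1 ≤ D) :
    G.IsRegularOfDegree (p 0 1 1) := by
  intro x
  rw [← hG.inter 0 1 1 D.zero_le hD hD x x G.dist_self, ← G.card_neighborFinset_eq_degree,
    ← Set.ncard_coe_finset]
  congr 1
  ext z
  simp

section Mul

variable {R : Type*} [Semiring R]

theorem sum_inter_zero_one (hG : IsDRG G D p) (hD : 1 ≤ D) (f : ℕ → R) :
    ∑ j ∈ Finset.range (D + 1), (p 0 1 j : R) * f j = p 0 1 1 * f 1 := by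
  refine Finset.sum_eq_single_of_mem 1 (Finset.mem_range_succ_iff.2 hD) fun j hj hj1 => ?_
  rw [hG.inter_eq_zero D.zero_le hD (Finset.mem_range_succ_iff.1 hj) (by omega), Nat.cast_zero,
    zero_mul]

theorem sum_inter_succ_one (hG : IsDRG G D p) {i : ℕ} (hi : i + 2 ≤ D) (f : ℕ → R) :
    ∑ j ∈ Finset.range (D + 1), (p (i + 1) 1 j : R) * f j =
      p (i + 1) 1 i * f i + p (i + 1) 1 (i + 1) * f (i + 1) +
        p (i + 1) 1 (i + 2) * f (i + 2) := by
  have hsub : Finset.Ico i (i + 3) ⊆ Finset.range (D + 1) := fun j hj => by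
    rw [Finset.mem_Ico] at hj
    exact Finset.mem_range.2 (by omega)
  rw [← Finset.sum_subset hsub]
  · simp [Finset.sum_Ico_succ_top]
  · intro j hj hj'
    rw [Finset.mem_Ico] at hj'
    rw [hG.inter_eq_zero (by omega) (by omega) (Finset.mem_range_succ_iff.1 hj) (by omega),
      Nat.cast_zero, zero_mul]

theorem distMatrix_mul_distMatrix (hG : IsDRG G D p) (f g : ℕ → R) :
    distMatrix G f * distMatrix G g = distMatrix G fun h =>
      ∑ i ∈ Finset.range (D + 1), ∑ j ∈ Finset.range (D + 1), (p h i j : R) * (f i * g j) := by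
  classical
  ext x y
  have hmem (a b : V) : G.dist a b ∈ Finset.range (D + 1) :=
    Finset.mem_range_succ_iff.2 (hG.dist_le a b)
  have hcard : ∀ i ∈ Finset.range (D + 1), ∀ j ∈ Finset.range (D + 1),
      (p (G.dist x y) i j : R) = ∑ z, if G.dist x z = i ∧ G.dist y z = j then 1 else 0 := by
    intro i hi j hj
    rw [← hG.inter _ i j (hG.dist_le x y) (Finset.mem_range_succ_iff.1 hi)
      (Finset.mem_range_succ_iff.1 hj) x y rfl, Set.ncard_eq_toFinset_card']
    simp
  calc (distMatrix G f * distMatrix G g) x y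
      = ∑ z, f (G.dist x z) * g (G.dist y z) :=
        Finset.sum_congr rfl fun z _ => by simp [G.dist_comm (u := y)]
    _ = ∑ z, ∑ i ∈ Finset.range (D + 1), ∑ j ∈ Finset.range (D + 1),
          (if G.dist x z = i ∧ G.dist y z = j then 1 else 0) * (f i * g j) := by
        simp [ite_and, hmem]
    _ = _ := by
        rw [Finset.sum_comm]
        refine Finset.sum_congr rfl fun i hi => ?_
        rw [Finset.sum_comm]
        exact Finset.sum_congr rfl fun j hj => by rw [← Finset.sum_mul, ← hcard i hi j hj]

theorem adjMatrix_mul_distMatrix [DecidableRel G.Adj] (hG : IsDRG G D p) (hD : 1 ≤ D)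
    (f : ℕ → R) :
    G.adjMatrix R * distMatrix G f =
      distMatrix G fun h => ∑ j ∈ Finset.range (D + 1), (p h 1 j : R) * f j := by
  rw [adjMatrix_eq_distMatrix, hG.distMatrix_mul_distMatrix]
  congr 1
  ext h
  rw [Finset.sum_eq_single_of_mem 1 (Finset.mem_range_succ_iff.2 hD)]
  · simp
  · intro i _ hi
    simp [hi]

end Mul

/-- The Bose–Mesner algebra of a distance-regular graph, described here as the algebra of all
matrices whose entries depend only on the distance rather than as the span of the distance matrices.
It is used to find a `θ`-eigenmatrix of the adjacency matrix that is a distance function. -/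
noncomputable def boseMesnerAlgebra [DecidableEq V] (hG : IsDRG G D p) (R : Type*)
    [CommSemiring R] : Subalgebra R (Matrix V V R) where
  carrier := Set.range (distMatrix G)
  mul_mem' := by
    rintro _ _ ⟨f, rfl⟩ ⟨g, rfl⟩
    exact ⟨_, (hG.distMatrix_mul_distMatrix f g).symm⟩
  add_mem' := by
    rintro _ _ ⟨f, rfl⟩ ⟨g, rfl⟩
    exact ⟨f + g, distMatrix_add G f g⟩
  algebraMap_mem' c := ⟨_, (algebraMap_eq_distMatrix G hG.connected c).symm⟩

theorem distMatrix_commute {R : Type*} [CommSemiring R] (hG : IsDRG G D p)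
    (f g : ℕ → R) : Commute (distMatrix G f) (distMatrix G g) := by
  have hsymm : (distMatrix G f * distMatrix G g).IsSymm :=
    hG.distMatrix_mul_distMatrix f g ▸ isSymm_distMatrix G _
  rw [Commute, SemiconjBy, ← hsymm.eq, Matrix.transpose_mul, (isSymm_distMatrix G f).eq,
    (isSymm_distMatrix G g).eq]

section StdSeq

variable {θ : ℝ} {u : ℕ → ℝ}

theorem eq_mul_stdSeq (hG : IsDRG G D p) (hu : IsStdSeq D p θ u) {f : ℕ → ℝ}
    (hf : ∀ h < D, ∑ j ∈ Finset.range (D + 1), (p h 1 j : ℝ) * f j = θ * f h) :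
    ∀ i ≤ D, f i = f 0 * u i := by
  obtain ⟨hu0, hu1, hrec⟩ := hu
  have hb {i : ℕ} (hi : i < D) : (p i 1 (i + 1) : ℝ) ≠ 0 :=
    Nat.cast_ne_zero.2 (hG.inter_one_succ_ne_zero hi)
  intro i
  induction i using Nat.twoStepInduction with
  | zero => simp [hu0]
  | one =>
    intro hD
    have h := hf 0 hD
    rw [hG.sum_inter_zero_one hD] at h
    have hk := hb hD
    rw [hu1]
    field_simp
    linear_combination h
  | more i ih₀ ih₁ =>
    intro hi
    have h := hf (i + 1) hi
    rw [hG.sum_inter_succ_one hi, ih₀ (by omega), ih₁ (by omega)] at h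
    have hui := hrec (i + 1) (by omega) (by omega)
    rw [Nat.add_sub_cancel] at hui
    refine mul_left_cancel₀ (hb hi) ?_
    linear_combination h - f 0 * hui

variable [DecidableRel G.Adj]

theorem exists_eq_smul_distMatrix_stdSeq (hG : IsDRG G D p) (hD : 1 ≤ D) (hu : IsStdSeq D p θ u)
    {f : ℕ → ℝ} (hf : G.adjMatrix ℝ * distMatrix G f = θ • distMatrix G f) :
    ∃ c : ℝ, distMatrix G f = c • distMatrix G u := by
  rw [hG.adjMatrix_mul_distMatrix hD, ← distMatrix_smul, hG.distMatrix_inj] at hf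
  refine ⟨f 0, ?_⟩
  rw [← distMatrix_smul, hG.distMatrix_inj]
  exact hG.eq_mul_stdSeq hu fun h hh => hf h hh.le

theorem adjMatrix_mul_distMatrix_stdSeq (hG : IsDRG G D p) (hD : 1 ≤ D)
    (hθ : IsAdjEigenval G θ) (hu : IsStdSeq D p θ u) :
    G.adjMatrix ℝ * distMatrix G u = θ • distMatrix G u := by
  classical
  have hspec : θ ∈ spectrum ℝ (G.adjMatrix ℝ) := by
    rw [← setOf_isEigenval_eq_spectrum]
    exact hθ
  obtain ⟨_, ⟨f, rfl⟩, hne, hf⟩ := exists_mem_mul_eq_smul_of_mem_spectrum (hG.boseMesnerAlgebra ℝ)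
    ⟨_, (adjMatrix_eq_distMatrix G).symm⟩ hspec
  obtain ⟨c, hc⟩ := hG.exists_eq_smul_distMatrix_stdSeq hD hu hf
  have hc0 : c ≠ 0 := by
    rintro rfl
    exact hne (by rw [hc, zero_smul])
  rw [hc, Matrix.mul_smul, smul_comm] at hf
  exact smul_right_injective _ hc0 hf

theorem exists_pos_distMatrix_stdSeq_mul_self_eq_smul (hG : IsDRG G D p) (hD : 1 ≤ D)
    (hθ : IsAdjEigenval G θ) (hu : IsStdSeq D p θ u) :
    ∃ μ : ℝ, 0 < μ ∧ distMatrix G u * distMatrix G u = μ • distMatrix G u := by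
  have hAU := hG.adjMatrix_mul_distMatrix_stdSeq hD hθ hu
  obtain ⟨μ, hμ⟩ : ∃ μ : ℝ, distMatrix G u * distMatrix G u = μ • distMatrix G u := by
    rw [hG.distMatrix_mul_distMatrix]
    refine hG.exists_eq_smul_distMatrix_stdSeq hD hu ?_
    rw [← hG.distMatrix_mul_distMatrix, ← Matrix.mul_assoc, hAU, Matrix.smul_mul]
  obtain ⟨x⟩ := hG.connected.nonempty
  refine ⟨μ, pos_of_mul_self_eq_smul (isSymm_distMatrix G u) hμ (x := x) ?_, hμ⟩
  simp [hu.1]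

theorem stdSeq_le_one (hG : IsDRG G D p) (hθ : IsAdjEigenval G θ) (hu : IsStdSeq D p θ u)
    {i : ℕ} (hi : i ≤ D) : u i ≤ 1 := by
  obtain rfl | hi0 := i.eq_zero_or_pos
  · exact hu.1.le
  obtain ⟨μ, hμ, hUU⟩ := hG.exists_pos_distMatrix_stdSeq_mul_self_eq_smul (hi0.trans_le hi) hθ hu
  obtain ⟨x, y, rfl⟩ := hG.exists_dist_eq_of_le hi
  have h := two_mul_apply_le_of_mul_self_eq_smul (isSymm_distMatrix G u) hμ hUU x y
  simp only [distMatrix_apply, G.dist_self, hu.1] at h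
  linarith

theorem stdSeq_one_lt_one (hG : IsDRG G D p) (hD : 1 ≤ D) (hθ : IsAdjEigenval G θ)
    (hθk : θ ≠ p 0 1 1) (hu : IsStdSeq D p θ u) : u 1 < 1 := by
  refine (hG.stdSeq_le_one hθ hu hD).lt_of_ne ?_
  rwa [hu.2.1, Ne, div_eq_one_iff_eq (Nat.cast_ne_zero.2 (hG.inter_one_succ_ne_zero hD))]

theorem distMatrix_one_mul_distMatrix_stdSeq (hG : IsDRG G D p) (hD : 1 ≤ D)
    (hθ : IsAdjEigenval G θ) (hθk : θ ≠ p 0 1 1) (hu : IsStdSeq D p θ u) :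
    distMatrix G 1 * distMatrix G u = 0 := by
  have hcomm := hG.distMatrix_commute 1 u
  have hAJ : G.adjMatrix ℝ * distMatrix G 1 = (p 0 1 1 : ℝ) • distMatrix G 1 := by
    ext x y
    simp [SimpleGraph.adjMatrix_mul_apply, hG.isRegularOfDegree hD x]
  have h : θ • (distMatrix G 1 * distMatrix G u) =
      (p 0 1 1 : ℝ) • (distMatrix G 1 * distMatrix G u) := by
    calc θ • (distMatrix G 1 * distMatrix G u)
        = G.adjMatrix ℝ * distMatrix G u * distMatrix G 1 := by
          rw [hG.adjMatrix_mul_distMatrix_stdSeq hD hθ hu, Matrix.smul_mul, hcomm.eq]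
      _ = G.adjMatrix ℝ * distMatrix G 1 * distMatrix G u := by
          rw [Matrix.mul_assoc, ← hcomm.eq, Matrix.mul_assoc]
      _ = (p 0 1 1 : ℝ) • (distMatrix G 1 * distMatrix G u) := by rw [hAJ, Matrix.smul_mul]
  rw [← sub_eq_zero, ← sub_smul] at h
  exact (smul_eq_zero.1 h).resolve_left (sub_ne_zero.2 hθk)

theorem exists_spectrum_smul_distMatrix_add_smul [DecidableEq V] (hG : IsDRG G D p) (hD : 2 ≤ D)
    (hθ : IsAdjEigenval G θ) (hθk : θ ≠ p 0 1 1) (hu : IsStdSeq D p θ u) (h12 : u 1 ≠ u 2) :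
    ∃ μ : ℝ, 0 < μ ∧ ∀ a b : ℝ, spectrum ℝ (a • distMatrix G 1 + b • distMatrix G u) =
      {a * Fintype.card V, b * μ, 0} := by
  have hD1 : 1 ≤ D := one_le_two.trans hD
  obtain ⟨μ, hμ, hUU⟩ := hG.exists_pos_distMatrix_stdSeq_mul_self_eq_smul hD1 hθ hu
  have : Nonempty V := hG.connected.nonempty
  have hJU := hG.distMatrix_one_mul_distMatrix_stdSeq hD1 hθ hθk hu
  have hne (f : ℕ → ℝ) (hf : f 0 = 1) : distMatrix G f ≠ 0 := by
    rw [← (distMatrix_zero G : _ = (0 : Matrix V V ℝ)), Ne, hG.distMatrix_inj]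
    exact fun h => one_ne_zero (hf.symm.trans (h 0 D.zero_le))
  refine ⟨μ, hμ, spectrum_smul_add_smul (distMatrix_one_mul_self G) hUU hJU
    ((hG.distMatrix_commute 1 u).eq ▸ hJU) (hne 1 rfl) (hne u hu.1) ?_ hμ.ne' ?_⟩
  · exact Nat.cast_ne_zero.2 Fintype.card_ne_zero
  · intro h
    rw [← map_one (algebraMap ℝ (Matrix V V ℝ)), algebraMap_eq_distMatrix G hG.connected,
      ← distMatrix_smul, ← distMatrix_smul, ← distMatrix_add, hG.distMatrix_inj] at h
    have hentry {i : ℕ} (hi : i ≤ D) (hi0 : i ≠ 0) :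
        (Fintype.card V : ℝ)⁻¹ + μ⁻¹ * u i = 0 := by
      simpa [hi0] using h i hi
    exact h12 <| mul_left_cancel₀ (inv_ne_zero hμ.ne') <| add_left_cancel <|
      (hentry hD1 one_ne_zero).trans (hentry hD two_ne_zero).symm

end StdSeq

end IsDRG

theorem IsClassicalQType.sub_eq_mul_geom_sum {D : ℕ} {q : ℝ} {u : ℕ → ℝ}
    (hu : IsClassicalQType D q u) {i : ℕ} (hi : i ≤ D) :
    u i - u 0 = (u 1 - u 0) * ∑ j ∈ Finset.range i, (1 / q) ^ j := by
  obtain ⟨c, hc⟩ := hu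
  induction i with
  | zero => simp
  | succ i ih =>
    have h1 := hc 1 le_rfl (by omega)
    have hi1 := hc (i + 1) (by omega) hi
    rw [Nat.add_sub_cancel] at hi1
    rw [Nat.sub_self] at h1
    rw [geom_sum_succ]
    linear_combination hi1 - h1 + (1 / q) * ih (by omega)

theorem IsClassicalQType.apply_one_ne_apply_two {D : ℕ} {q : ℝ} {u : ℕ → ℝ}
    (hu : IsClassicalQType D q u) (hD : 2 ≤ D) (hq : q ≠ 0) (h01 : u 1 ≠ u 0) : u 1 ≠ u 2 := by
  have h := hu.sub_eq_mul_geom_sum hD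
  rw [geom_sum_two] at h
  intro h12
  have hmul : (u 1 - u 0) * (1 / q) = 0 := by linear_combination -h - h12
  exact mul_ne_zero (sub_ne_zero.2 h01) (one_div_ne_zero hq) hmul

theorem IsClassicalQType.pos_or_le_neg_one {D : ℕ} {q : ℝ} {u : ℕ → ℝ}
    (hu : IsClassicalQType D q u) (hD : 2 ≤ D) (hq : q ≠ 0) (h1 : u 1 < u 0) (h2 : u 2 ≤ u 0) :
    0 < q ∨ q ≤ -1 := by
  have h := hu.sub_eq_mul_geom_sum hD
  rw [geom_sum_two] at h
  have hle : 0 ≤ 1 / q + 1 := by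
    refine nonneg_of_mul_nonneg_right ?_ (sub_pos.2 h1)
    linarith
  refine hq.lt_or_gt.symm.imp_right fun hq0 => ?_
  have hmul := mul_nonpos_of_nonpos_of_nonneg hq0.le hle
  rw [mul_add, mul_one_div_cancel hq] at hmul
  linarith

theorem qDistMatrix_eq_smul_add_smul {V : Type*} [Fintype V] {G : SimpleGraph V} {D : ℕ}
    (hdist : ∀ x y, G.dist x y ≤ D) {q : ℝ} {u : ℕ → ℝ} (hu : IsClassicalQType D q u)
    (hu0 : u 0 = 1) (hu1 : u 1 ≠ 1) :
    qDistMatrix G q = (1 - u 1)⁻¹ • distMatrix G 1 + (-(1 - u 1)⁻¹) • distMatrix G u := by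
  ext x y
  have h := hu.sub_eq_mul_geom_sum (hdist x y)
  have hu1' : 1 - u 1 ≠ 0 := sub_ne_zero.2 hu1.symm
  rw [hu0] at h
  have hentry : qDistMatrix G q x y = (1 - u 1)⁻¹ * (1 - u (G.dist x y)) := by
    rw [eq_inv_mul_iff_mul_eq₀ hu1', qDistMatrix, Matrix.of_apply]
    linear_combination h
  rw [hentry]
  simp only [neg_smul, Matrix.add_apply, Matrix.smul_apply, distMatrix_apply, Pi.one_apply,
    smul_eq_mul, mul_one, Matrix.neg_apply]
  ring

/-- If a distance-regular graph `Γ` of diameter `D ≥ 2` on `n ≥ 3` vertices has an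
eigenvalue `θ ≠ k` of classical `q`-type, then the `q`-distance matrix has exactly three
distinct eigenvalues, one of which is `0`; moreover `q > 0` or `q ≤ -1`. -/
theorem stmt6 {V : Type*} [Fintype V] (G : SimpleGraph V) [DecidableRel G.Adj]
    (D : ℕ) (p : ℕ → ℕ → ℕ → ℕ) (hdrg : IsDRG G D p) (hD : 2 ≤ D)
    (hcard : 3 ≤ Fintype.card V)
    (q : ℝ) (hq : q ≠ 0)
    (θ : ℝ) (hθ : IsAdjEigenval G θ) (hθk : θ ≠ (p 0 1 1 : ℝ))
    (u : ℕ → ℝ) (hu : IsStdSeq D p θ u) (hct : IsClassicalQType D q u) :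
    (∃ a b : ℝ, a ≠ b ∧ a ≠ 0 ∧ b ≠ 0 ∧
        {η : ℝ | IsEigenval (qDistMatrix G q) η} = {a, b, 0}) ∧
      (0 < q ∨ q ≤ -1) := by
  classical
  have hD1 : 1 ≤ D := one_le_two.trans hD
  have hu1 : u 1 < 1 := hdrg.stdSeq_one_lt_one hD1 hθ hθk hu
  have hu10 : u 1 < u 0 := hu1.trans_eq hu.1.symm
  have hu20 : u 2 ≤ u 0 := (hdrg.stdSeq_le_one hθ hu hD).trans_eq hu.1.symm
  refine ⟨?_, hct.pos_or_le_neg_one hD hq hu10 hu20⟩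
  obtain ⟨μ, hμ, hspec⟩ := hdrg.exists_spectrum_smul_distMatrix_add_smul hD hθ hθk hu
    (hct.apply_one_ne_apply_two hD hq hu10.ne)
  have ht : 0 < (1 - u 1)⁻¹ := inv_pos.2 (sub_pos.2 hu1)
  have hn : 0 < (1 - u 1)⁻¹ * (Fintype.card V : ℝ) :=
    mul_pos ht (Nat.cast_pos.2 (zero_lt_three.trans_le hcard))
  have hμt : -(1 - u 1)⁻¹ * μ < 0 := mul_neg_of_neg_of_pos (neg_neg_of_pos ht) hμ
  refine ⟨_, _, (hμt.trans hn).ne', hn.ne', hμt.ne, ?_⟩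
  rw [setOf_isEigenval_eq_spectrum, qDistMatrix_eq_smul_add_smul hdrg.dist_le hct hu.1 hu1.ne]
  exact hspec _ _
end
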